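/- Assume a−b is odd and N_m = 0 (i.e. the associated normalized rank-2 bundle is stable with c_1 = −1). Then for a general linear form L ∈ R_1, the multiplication map ×L : M_{d−1} → M_d is injective for all d ≤ m−1 and surjective for all d ≥ m. -/

import Mathlib

open MvPolynomial

noncomputable section

variable {K : Type*} [Field K]

/-- `p` is homogeneous of (integer) degree `d`; for `d < 0` this forces `p = 0`. -/
def homog (p : MvPolynomial (Fin 3) K) (d : ℤ) : Prop :=
  IsWeightedHomogeneous (fun _ : Fin 3 => (1 : ℤ)) p d

/-- The degree-`d` graded piece of `⊕_{i=1}^{N} R(-a i)`, as a `K`-subspace of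
`Fin N → R`, `R = K[x,y,z]`. -/
def degPiece (N : ℕ) (a : Fin N → ℤ) (d : ℤ) :
    Submodule K (Fin N → MvPolynomial (Fin 3) K) :=
  Submodule.pi Set.univ fun i =>
    weightedHomogeneousSubmodule K (fun _ : Fin 3 => (1 : ℤ)) (d - a i)

lemma mem_degPiece {N : ℕ} {a : Fin N → ℤ} {d : ℤ} {v : Fin N → MvPolynomial (Fin 3) K} :
    v ∈ degPiece (K := K) N a d ↔ ∀ i, homog (v i) (d - a i) := by
  simp [degPiece, Submodule.mem_pi, mem_weightedHomogeneousSubmodule, homog]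

/-- The map `φ : ⊕ R(-a i) → ⊕ R(-b j)` given by the matrix `Φ`, as a `K`-linear map. -/
def phiK (n : ℕ) (Φ : Matrix (Fin n) (Fin (n + 2)) (MvPolynomial (Fin 3) K)) :
    (Fin (n + 2) → MvPolynomial (Fin 3) K) →ₗ[K] (Fin n → MvPolynomial (Fin 3) K) :=
  (Matrix.mulVecLin Φ).restrictScalars K

/-- The degree-`d` graded piece of `N = ker φ`. -/
def Nd (n : ℕ) (a : Fin (n + 2) → ℤ) (Φ : Matrix (Fin n) (Fin (n + 2)) (MvPolynomial (Fin 3) K))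
    (d : ℤ) : Submodule K (Fin (n + 2) → MvPolynomial (Fin 3) K) :=
  degPiece (n + 2) a d ⊓ LinearMap.ker (phiK n Φ)

/-- The image of the degree-`d` piece of `F` inside the degree-`d` piece of `G`,
viewed as a subspace of the latter. -/
def MdSub (n : ℕ) (a : Fin (n + 2) → ℤ) (b : Fin n → ℤ)
    (Φ : Matrix (Fin n) (Fin (n + 2)) (MvPolynomial (Fin 3) K)) (d : ℤ) :
    Submodule K ↥(degPiece (K := K) n b d) :=
  Submodule.comap (degPiece (K := K) n b d).subtype
    (Submodule.map (phiK n Φ) (degPiece (n + 2) a d))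

/-- The degree-`d` graded piece of `M = coker φ`. -/
abbrev Md (n : ℕ) (a : Fin (n + 2) → ℤ) (b : Fin n → ℤ)
    (Φ : Matrix (Fin n) (Fin (n + 2)) (MvPolynomial (Fin 3) K)) (d : ℤ) :=
  ↥(degPiece (K := K) n b d) ⧸ MdSub n a b Φ d

/-- Multiplication by `L` on tuples of polynomials, as a `K`-linear map. -/
def mulL (N : ℕ) (L : MvPolynomial (Fin 3) K) :
    (Fin N → MvPolynomial (Fin 3) K) →ₗ[K] (Fin N → MvPolynomial (Fin 3) K) :=
  ((LinearMap.lsmul (MvPolynomial (Fin 3) K) (Fin N → MvPolynomial (Fin 3) K)) L).restrictScalars K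

lemma mulL_apply {N : ℕ} (L : MvPolynomial (Fin 3) K) (v : Fin N → MvPolynomial (Fin 3) K) :
    mulL N L v = L • v := rfl

lemma mulL_mem {N : ℕ} {a : Fin N → ℤ} {L : MvPolynomial (Fin 3) K} (hL : homog L 1)
    {d : ℤ} {v : Fin N → MvPolynomial (Fin 3) K} (hv : v ∈ degPiece (K := K) N a (d - 1)) :
    mulL N L v ∈ degPiece (K := K) N a d := by
  rw [mem_degPiece] at hv ⊢
  intro i
  have h := hL.mul (hv i)
  have e : (1 : ℤ) + (d - 1 - a i) = d - a i := by ring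
  rw [e] at h
  simpa [mulL_apply, smul_eq_mul, homog] using h

/-- Multiplication by `L` from the degree-`d-1` piece of `G` to the degree-`d` piece. -/
def mulLres (n : ℕ) (b : Fin n → ℤ) (L : MvPolynomial (Fin 3) K) (hL : homog L 1) (d : ℤ) :
    ↥(degPiece (K := K) n b (d - 1)) →ₗ[K] ↥(degPiece (K := K) n b d) :=
  (mulL n L).restrict fun _ hv => mulL_mem hL hv

lemma mulLres_comap (n : ℕ) (a : Fin (n + 2) → ℤ) (b : Fin n → ℤ)
    (Φ : Matrix (Fin n) (Fin (n + 2)) (MvPolynomial (Fin 3) K))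
    (L : MvPolynomial (Fin 3) K) (hL : homog L 1) (d : ℤ) :
    MdSub n a b Φ (d - 1) ≤ Submodule.comap (mulLres n b L hL d) (MdSub n a b Φ d) := by
  rintro ⟨w, hw⟩ hmem
  obtain ⟨v, hv, hφv⟩ := hmem
  refine ⟨mulL (n + 2) L v, mulL_mem hL hv, ?_⟩
  show phiK n Φ (mulL (n + 2) L v) = ((mulLres n b L hL d) ⟨w, hw⟩ : Fin n → MvPolynomial (Fin 3) K)
  have : phiK n Φ (mulL (n + 2) L v) = L • phiK n Φ v := by
    simp [phiK, mulL_apply]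
  rw [this, hφv]
  rfl

/-- The map induced by multiplication by `L` from `M_{d-1}` to `M_d`,
where `M = coker φ`. -/
def mulLmap (n : ℕ) (a : Fin (n + 2) → ℤ) (b : Fin n → ℤ)
    (Φ : Matrix (Fin n) (Fin (n + 2)) (MvPolynomial (Fin 3) K))
    (L : MvPolynomial (Fin 3) K) (hL : homog L 1) (d : ℤ) :
    Md n a b Φ (d - 1) →ₗ[K] Md n a b Φ d :=
  Submodule.mapQ (MdSub n a b Φ (d - 1)) (MdSub n a b Φ d) (mulLres n b L hL d)
    (mulLres_comap n a b Φ L hL d)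

/-- The linear form with coefficient vector `c`. -/
def linform (c : Fin 3 → K) : MvPolynomial (Fin 3) K := ∑ i, C (c i) * X i

lemma homog_linform (c : Fin 3 → K) : homog (linform c) 1 := by
  rw [homog, ← mem_weightedHomogeneousSubmodule]
  refine sum_mem fun i _ => ?_
  rw [mem_weightedHomogeneousSubmodule]
  simpa using (isWeightedHomogeneous_C (fun _ : Fin 3 => (1 : ℤ)) (c i)).mul
    (isWeightedHomogeneous_X K (fun _ : Fin 3 => (1 : ℤ)) i)

/-- Finite length of `coker φ`: all sufficiently high graded pieces vanish. -/
def FiniteColength (n : ℕ) (a : Fin (n + 2) → ℤ) (b : Fin n → ℤ)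
    (Φ : Matrix (Fin n) (Fin (n + 2)) (MvPolynomial (Fin 3) K)) : Prop :=
  ∃ D : ℤ, ∀ d : ℤ, D ≤ d →
    degPiece (K := K) n b d ≤ Submodule.map (phiK n Φ) (degPiece (n + 2) a d)

end

/-!
Let `E` be the bundle of rank two on the plane with sections `N`. Over the line `L = 0` the matrix
`Φ` becomes a surjection of split bundles with kernel `E|L`. Dividing by `L` shows that
`×L : M_{d-1} → M_d` is injective if `E|L(d)` has no sections and surjective if `H¹(E|L(d)) = 0`.
The function `d ↦ h¹(E|L(d))` is convex and eventually zero, so if `E|L(m - 1)` has no sections,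
where its Euler characteristic is at least `-1`, then `h¹` vanishes from degree `m` on.

It remains to see that `E|L(m - 1)` has no sections for general `L`, which is the argument of
Grauert and Mülich. A primitive section `w` of degree `m - 1` over the generic line can be
differentiated along the pencils of lines through each point, which gives a section of degree `m`.
Since `(m - 1) + m < a - b`, both sections are proportional, so each entry of `w` divides its
derivative. For degree reasons this derivative vanishes; in characteristic zero `w` then depends
only on the point and not on the line, so it comes from a nonzero element of `N_{m-1}`.
-/

noncomputable section

open scoped Polynomial

section BoundedDegree

variable {A : Type*} [CommRing A]

variable (A) in
/-- Polynomials of degree at most the integer `e`; the zero module when `e < 0`. On the chart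
`y = 1` of a line this is `H⁰(𝒪(e))`. -/
def degLE (e : ℤ) : Submodule A A[X] :=
  Polynomial.degreeLT A (e + 1).toNat

lemma mem_degLE {e : ℤ} {p : A[X]} : p ∈ degLE A e ↔ ∀ k : ℕ, e < k → p.coeff k = 0 := by
  rw [degLE, Polynomial.mem_degreeLT, Polynomial.degree_lt_iff_coeff_zero]
  exact forall_congr' fun k => by rw [show (e + 1).toNat ≤ k ↔ e < k by omega]

lemma mem_degLE_of_natDegree_le {k : ℕ} {p : A[X]} (h : p.natDegree ≤ k) : p ∈ degLE A k :=
  mem_degLE.2 fun _ hl => Polynomial.coeff_eq_zero_of_natDegree_lt (by omega)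

lemma degLE_mono {d e : ℤ} (h : d ≤ e) : degLE A d ≤ degLE A e := fun _ hp =>
  mem_degLE.2 fun k hk => mem_degLE.1 hp k (h.trans_lt hk)

lemma mul_mem_degLE {d e : ℤ} {p q : A[X]} (hp : p ∈ degLE A d) (hq : q ∈ degLE A e) :
    p * q ∈ degLE A (d + e) := by
  rw [mem_degLE] at *
  intro k hk
  rw [Polynomial.coeff_mul]
  refine Finset.sum_eq_zero fun x hx => ?_
  have hx := Finset.HasAntidiagonal.mem_antidiagonal.1 hx
  by_cases h : d < x.1
  · rw [hp _ h, zero_mul]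
  · rw [hq x.2 (by omega), mul_zero]

lemma X_mul_mem_degLE {e : ℤ} {p : A[X]} : Polynomial.X * p ∈ degLE A (e + 1) ↔ p ∈ degLE A e := by
  simp only [mem_degLE]
  refine ⟨fun h k hk => ?_, fun h k hk => ?_⟩
  · simpa only [Polynomial.coeff_X_mul] using h (k + 1) (by omega)
  · cases k with
    | zero => exact Polynomial.coeff_X_mul_zero p
    | succ k => rw [Polynomial.coeff_X_mul, h k (by omega)]

lemma mem_degLE_of_mul_mem [IsDomain A] {e : ℤ} {p q : A[X]} (hq : q ≠ 0)
    (h : q * p ∈ degLE A e) : p ∈ degLE A e := by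
  by_cases hp : p = 0
  · exact hp ▸ Submodule.zero_mem _
  refine mem_degLE.2 fun k hk => Polynomial.coeff_eq_zero_of_natDegree_lt ?_
  by_contra! hle
  have hcoeff := mem_degLE.1 h (q * p).natDegree (by
    rw [Polynomial.natDegree_mul hq hp]
    omega)
  rw [Polynomial.coeff_natDegree, Polynomial.leadingCoeff_eq_zero] at hcoeff
  exact mul_ne_zero hq hp hcoeff

lemma eq_sum_of_mem_degLE {e : ℤ} {p : A[X]} (hp : p ∈ degLE A e) :
    p = ∑ l : Fin (e + 1).toNat, Polynomial.C (p.coeff l) * Polynomial.X ^ (l : ℕ) := by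
  ext k
  rw [Fin.sum_univ_eq_sum_range fun l => Polynomial.C (p.coeff l) * Polynomial.X ^ l]
  simp only [Polynomial.finsetSum_coeff, Polynomial.coeff_C_mul_X_pow, Finset.sum_ite_eq,
    Finset.mem_range]
  split_ifs with h
  · rfl
  · exact mem_degLE.1 hp k (by omega)

lemma map_mem_degLE {B : Type*} [CommRing B] (f : A →+* B) {e : ℤ} {p : A[X]}
    (hp : p ∈ degLE A e) : p.map f ∈ degLE B e :=
  mem_degLE.2 fun k hk => by rw [Polynomial.coeff_map, mem_degLE.1 hp k hk, map_zero]

lemma C_mem_degLE (c : A) : Polynomial.C c ∈ degLE A 0 := by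
  exact_mod_cast mem_degLE_of_natDegree_le (Polynomial.natDegree_C c).le

lemma prod_mem_degLE {σ : Type*} (s : Finset σ) {e : σ → ℤ} {f : σ → A[X]}
    (hf : ∀ i, f i ∈ degLE A (e i)) : ∏ i ∈ s, f i ∈ degLE A (∑ i ∈ s, e i) := by
  classical
  induction s using Finset.induction_on with
  | empty => simpa using C_mem_degLE (1 : A)
  | insert i s hi ih =>
    rw [Finset.prod_insert hi, Finset.sum_insert hi]
    exact mul_mem_degLE (hf i) ih

lemma pow_mem_degLE {e : ℤ} {p : A[X]} (hp : p ∈ degLE A e) (k : ℕ) : p ^ k ∈ degLE A (k * e) := by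
  simpa using prod_mem_degLE (Finset.range k) fun _ => hp

lemma aeval_mem_degLE {R σ : Type*} [CommRing R] [Algebra R A] {w : σ → ℤ} {f : σ → A[X]}
    (hf : ∀ i, f i ∈ degLE A (w i)) {d : ℤ} {p : MvPolynomial σ R}
    (hp : IsWeightedHomogeneous w p d) : aeval f p ∈ degLE A d := by
  rw [p.as_sum, map_sum]
  refine Submodule.sum_mem _ fun u hu => ?_
  rw [aeval_monomial, ← hp (mem_support_iff.1 hu), ← zero_add (Finsupp.weight w u)]
  refine mul_mem_degLE (C_mem_degLE (algebraMap R A _)) ?_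
  rw [Finsupp.weight_apply]
  exact prod_mem_degLE _ fun i => by
    simpa only [nsmul_eq_mul] using pow_mem_degLE (hf i) (u i)

/-- The degree-`d` piece of `⊕ 𝒪(-a i)` over a line: tuples whose `i`-th entry has degree at most
`d - a i`. -/
def tupleDegLE {ι : Type*} (a : ι → ℤ) (d : ℤ) : Submodule A (ι → A[X]) :=
  Submodule.pi Set.univ fun i => degLE A (d - a i)

section Tuples

variable {ι : Type*} {a : ι → ℤ} {d e : ℤ}

lemma mem_tupleDegLE {v : ι → A[X]} : v ∈ tupleDegLE a d ↔ ∀ i, v i ∈ degLE A (d - a i) := by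
  simp [tupleDegLE, Submodule.mem_pi]

lemma tupleDegLE_mono (h : d ≤ e) : tupleDegLE (A := A) a d ≤ tupleDegLE a e := fun _ hv =>
  mem_tupleDegLE.2 fun i => degLE_mono (by omega) (mem_tupleDegLE.1 hv i)

lemma smul_mem_tupleDegLE {p : A[X]} {v : ι → A[X]} (hp : p ∈ degLE A e)
    (hv : v ∈ tupleDegLE a d) : p • v ∈ tupleDegLE a (e + d) :=
  mem_tupleDegLE.2 fun i => by
    simpa only [Pi.smul_apply, smul_eq_mul, add_sub_assoc] using
      mul_mem_degLE hp (mem_tupleDegLE.1 hv i)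

lemma X_smul_mem_tupleDegLE {v : ι → A[X]} :
    (Polynomial.X : A[X]) • v ∈ tupleDegLE a (d + 1) ↔ v ∈ tupleDegLE a d := by
  simp only [mem_tupleDegLE, Pi.smul_apply, smul_eq_mul, add_sub_right_comm, X_mul_mem_degLE]

lemma mulVec_mem_tupleDegLE [Fintype ι] {κ : Type*} {b : κ → ℤ} {Ψ : Matrix κ ι A[X]}
    (hΨ : ∀ j i, Ψ j i ∈ degLE A (a i - b j)) {v : ι → A[X]} (hv : v ∈ tupleDegLE a d) :
    Ψ.mulVec v ∈ tupleDegLE b d :=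
  mem_tupleDegLE.2 fun j => Submodule.sum_mem _ fun i _ => by
    simpa only [sub_add_sub_cancel'] using mul_mem_degLE (hΨ j i) (mem_tupleDegLE.1 hv i)

end Tuples

section Coefficients

variable {ι : Type*} (a : ι → ℤ) (d : ℤ)

/-- The positions of the coefficients of an element of `tupleDegLE a d`. -/
abbrev CoeffIndex : Type _ := Σ i : ι, Fin (d - a i + 1).toNat

variable (A) in
/-- An element of `tupleDegLE a d` is determined by its coefficients, which are arbitrary. -/
def coeffEquiv : tupleDegLE (A := A) a d ≃ₗ[A] (CoeffIndex a d → A) where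
  toFun v x := (v.1 x.1).coeff x.2
  map_add' _ _ := by ext; simp
  map_smul' _ _ := by ext; simp
  invFun c := ⟨fun i => ((Polynomial.degreeLTEquiv A (d - a i + 1).toNat).symm fun k => c ⟨i, k⟩).1,
    mem_tupleDegLE.2 fun _ => Subtype.coe_prop _⟩
  left_inv v := Subtype.ext <| funext fun i => congrArg Subtype.val <|
    (Polynomial.degreeLTEquiv A _).symm_apply_apply ⟨v.1 i, mem_tupleDegLE.1 v.2 i⟩
  right_inv c := funext fun x => congrFun
    ((Polynomial.degreeLTEquiv A _).apply_symm_apply fun k => c ⟨x.1, k⟩) x.2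

@[simp]
lemma coeffEquiv_apply (v : tupleDegLE (A := A) a d) (x : CoeffIndex a d) :
    coeffEquiv A a d v x = (v.1 x.1).coeff x.2 := rfl

end Coefficients

end BoundedDegree

section KernelOnLine

open scoped Pointwise

variable {ι κ : Type*} [Fintype ι]

section CommRing

variable {A : Type*} [CommRing A]

/-- The degree-`d` piece of the kernel of a matrix of polynomials `⊕ 𝒪(-a i) → ⊕ 𝒪(-b j)`. -/
def kerDegLE (a : ι → ℤ) (Ψ : Matrix κ ι A[X]) (d : ℤ) : Submodule A (ι → A[X]) :=
  tupleDegLE a d ⊓ LinearMap.ker (Ψ.mulVecLin.restrictScalars A)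

/-- The matrix `Ψ : ⊕ 𝒪(-a i) → ⊕ 𝒪(-b j)` is surjective on global sections in degree `d`. -/
def SurjInDegree (a : ι → ℤ) (b : κ → ℤ) (Ψ : Matrix κ ι A[X]) (d : ℤ) : Prop :=
  tupleDegLE b d ≤ (tupleDegLE a d).map (Ψ.mulVecLin.restrictScalars A)

variable {a : ι → ℤ} {b : κ → ℤ} {Ψ : Matrix κ ι A[X]} {d e : ℤ}

lemma mem_kerDegLE {v : ι → A[X]} :
    v ∈ kerDegLE a Ψ d ↔ v ∈ tupleDegLE a d ∧ Ψ.mulVec v = 0 := Iff.rfl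

lemma surjInDegree_iff : SurjInDegree a b Ψ d ↔
    ∀ g ∈ tupleDegLE b d, ∃ v ∈ tupleDegLE a d, Ψ.mulVec v = g := Iff.rfl

lemma kerDegLE_mono (h : d ≤ e) : kerDegLE a Ψ d ≤ kerDegLE a Ψ e :=
  inf_le_inf_right _ (tupleDegLE_mono h)

lemma smul_mem_kerDegLE {p : A[X]} {v : ι → A[X]} (hp : p ∈ degLE A e)
    (hv : v ∈ kerDegLE a Ψ d) : p • v ∈ kerDegLE a Ψ (e + d) :=
  mem_kerDegLE.2 ⟨smul_mem_tupleDegLE hp hv.1, by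
    rw [Matrix.mulVec_smul, (mem_kerDegLE.1 hv).2, smul_zero]⟩

lemma X_smul_mem_kerDegLE {v : ι → A[X]} :
    (Polynomial.X : A[X]) • v ∈ kerDegLE a Ψ (d + 1) ↔ v ∈ kerDegLE a Ψ d := by
  rw [mem_kerDegLE, mem_kerDegLE, X_smul_mem_tupleDegLE, Matrix.mulVec_smul]
  refine and_congr_right fun _ => ⟨fun h => funext fun j => ?_, fun h => by rw [h, smul_zero]⟩
  exact Polynomial.isRegular_X.left ((congrFun h j).trans (mul_zero _).symm)

lemma kerDegLE_sup_X_smul_le :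
    kerDegLE a Ψ d ⊔ (Polynomial.X : A[X]) • kerDegLE a Ψ d ≤ kerDegLE a Ψ (d + 1) := by
  refine sup_le (kerDegLE_mono (by omega)) fun v hv => ?_
  obtain ⟨w, hw, rfl⟩ := hv
  exact X_smul_mem_kerDegLE.2 hw

lemma kerDegLE_inf_X_smul :
    kerDegLE a Ψ d ⊓ (Polynomial.X : A[X]) • kerDegLE a Ψ d =
      (Polynomial.X : A[X]) • kerDegLE a Ψ (d - 1) := by
  refine le_antisymm ?_ (le_inf ?_ (Submodule.map_mono (kerDegLE_mono (by omega))))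
  · rintro _ ⟨hv, w, -, rfl⟩
    refine ⟨w, X_smul_mem_kerDegLE.1 ?_, rfl⟩
    rwa [sub_add_cancel]
  · rintro _ ⟨w, hw, rfl⟩
    rw [← sub_add_cancel d 1]
    exact X_smul_mem_kerDegLE.2 hw

lemma SurjInDegree.of_add_one (hgen : kerDegLE a Ψ (d + 1) ⊔
      (Polynomial.X : A[X]) • kerDegLE a Ψ (d + 1) = kerDegLE a Ψ (d + 1 + 1))
    (h : SurjInDegree a b Ψ (d + 1)) : SurjInDegree a b Ψ d := by
  rw [surjInDegree_iff] at h ⊢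
  intro g hg
  obtain ⟨f₁, hf₁, hΨ₁⟩ := h g (tupleDegLE_mono (by omega) hg)
  obtain ⟨f₀, hf₀, hΨ₀⟩ := h ((Polynomial.X : A[X]) • g) (X_smul_mem_tupleDegLE.2 hg)
  have hker : (Polynomial.X : A[X]) • f₁ - f₀ ∈ kerDegLE a Ψ (d + 1 + 1) :=
    mem_kerDegLE.2 ⟨Submodule.sub_mem _ (X_smul_mem_tupleDegLE.2 hf₁)
      (tupleDegLE_mono (by omega) hf₀), by
      rw [Matrix.mulVec_sub, Matrix.mulVec_smul, hΨ₁, hΨ₀, sub_self]⟩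
  rw [← hgen, Submodule.mem_sup] at hker
  obtain ⟨u₀, hu₀, _, ⟨u₁, hu₁, rfl⟩, hsum⟩ := hker
  have hX : (Polynomial.X : A[X]) • (f₁ - u₁) = f₀ + u₀ := by
    rw [smul_sub, sub_eq_iff_eq_add, add_assoc, ← sub_eq_iff_eq_add', ← hsum]; rfl
  refine ⟨f₁ - u₁, X_smul_mem_tupleDegLE.1 ?_, ?_⟩
  · rw [hX]
    exact Submodule.add_mem _ hf₀ hu₀.1
  · rw [Matrix.mulVec_sub, hΨ₁, (mem_kerDegLE.1 hu₁).2, sub_zero]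

end CommRing

/-- The Euler characteristic of the `d`-th twist of the kernel of a surjection
`⊕ 𝒪(-a i) → ⊕ 𝒪(-b j)` of bundles on a line. -/
def eulerChar [Fintype κ] (a : ι → ℤ) (b : κ → ℤ) (d : ℤ) : ℤ :=
  ∑ i, (d - a i + 1) - ∑ j, (d - b j + 1)

lemma eulerChar_eq [Fintype κ] (a : ι → ℤ) (b : κ → ℤ) (d : ℤ) :
    eulerChar a b d = (Fintype.card ι - Fintype.card κ) * (d + 1) - (∑ i, a i - ∑ j, b j) := by
  simp only [eulerChar, Finset.sum_add_distrib, Finset.sum_sub_distrib, Finset.sum_const,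
    Finset.card_univ, nsmul_eq_mul]
  ring

section Field

open Module

variable {k : Type*} [Field k] {a : ι → ℤ} {b : κ → ℤ} {Ψ : Matrix κ ι k[X]} {d e : ℤ}

omit [Fintype ι] in
instance [Finite ι] : FiniteDimensional k (tupleDegLE (A := k) a d) :=
  Module.Finite.equiv (coeffEquiv k a d).symm

instance : FiniteDimensional k (kerDegLE a Ψ d) :=
  Submodule.finiteDimensional_of_le (inf_le_left : _ ≤ tupleDegLE a d)

lemma finrank_degLE (e : ℤ) : finrank k (degLE k e) = (e + 1).toNat := by
  rw [degLE, (Polynomial.degreeLTEquiv k _).finrank_eq, finrank_fin_fun]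

instance (e : ℤ) : FiniteDimensional k (degLE k e) :=
  Module.Finite.equiv (Polynomial.degreeLTEquiv k _).symm

variable (k a) in
lemma eventually_finrank_tupleDegLE :
    ∀ᶠ d in Filter.atTop, (finrank k (tupleDegLE (A := k) a d) : ℤ) = ∑ i, (d - a i + 1) := by
  filter_upwards [Filter.eventually_all.2 fun i => Filter.eventually_ge_atTop (a i)] with d hd
  rw [(coeffEquiv k a d).finrank_eq, finrank_fintype_fun_eq_card, Fintype.card_sigma]
  push_cast [Fintype.card_fin]
  exact Finset.sum_congr rfl fun i _ => by have := hd i; omega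

lemma SurjInDegree.finrank_kerDegLE_add [Finite κ] (h : SurjInDegree a b Ψ d)
    (hΨ : ∀ j i, Ψ j i ∈ degLE k (a i - b j)) :
    finrank k (tupleDegLE (A := k) b d) + finrank k (kerDegLE a Ψ d) =
      finrank k (tupleDegLE (A := k) a d) := by
  let f := Ψ.mulVecLin.restrictScalars k
  have hmap : (tupleDegLE a d).map f = tupleDegLE b d :=
    le_antisymm (Submodule.map_le_iff_le_comap.2 fun v => mulVec_mem_tupleDegLE hΨ) h
  rw [← hmap, ← LinearMap.finrank_range_add_finrank_ker (f.domRestrict (tupleDegLE a d)),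
    LinearMap.range_domRestrict, LinearMap.ker_domRestrict,
    ← Submodule.finrank_map_subtype_eq, Submodule.map_comap_subtype]
  rfl

lemma eventually_finrank_kerDegLE [Fintype κ] (hΨ : ∀ j i, Ψ j i ∈ degLE k (a i - b j))
    (hs : ∀ᶠ d in Filter.atTop, SurjInDegree a b Ψ d) :
    ∀ᶠ d in Filter.atTop, (finrank k (kerDegLE a Ψ d) : ℤ) = eulerChar a b d := by
  filter_upwards [hs, eventually_finrank_tupleDegLE k a, eventually_finrank_tupleDegLE k b]
    with d hd ha hb
  have := hd.finrank_kerDegLE_add hΨ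
  rw [eulerChar, ← ha, ← hb]
  omega

/-- Otherwise the multiples of `v` and `w` would outnumber the sections of large degree. -/
lemma mul_eq_mul_of_mem_kerDegLE [Fintype κ] (hcard : Fintype.card ι = Fintype.card κ + 2)
    (hΨ : ∀ j i, Ψ j i ∈ degLE k (a i - b j)) (hs : ∀ᶠ d in Filter.atTop, SurjInDegree a b Ψ d)
    (hde : d + e < ∑ i, a i - ∑ j, b j) {v w : ι → k[X]} (hv : v ∈ kerDegLE a Ψ d)
    (hw : w ∈ kerDegLE a Ψ e) (i j : ι) : v i * w j = v j * w i := by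
  by_contra hne
  obtain ⟨D, hD, hdD, heD⟩ := ((eventually_finrank_kerDegLE hΨ hs).and
    ((Filter.eventually_ge_atTop d).and (Filter.eventually_ge_atTop e))).exists
  let f : (degLE k (D - d) × degLE k (D - e)) →ₗ[k] (ι → k[X]) :=
    LinearMap.coprod
      ((LinearMap.toSpanSingleton k[X] _ v).restrictScalars k ∘ₗ (degLE k (D - d)).subtype)
      ((LinearMap.toSpanSingleton k[X] _ w).restrictScalars k ∘ₗ (degLE k (D - e)).subtype)
  have hf (x) : f x ∈ kerDegLE a Ψ D := Submodule.add_mem _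
    (by have h := smul_mem_kerDegLE x.1.2 hv; rwa [sub_add_cancel] at h)
    (by have h := smul_mem_kerDegLE x.2.2 hw; rwa [sub_add_cancel] at h)
  have hinj : Function.Injective (f.codRestrict _ hf) := by
    rw [← LinearMap.ker_eq_bot, LinearMap.ker_codRestrict, LinearMap.ker_eq_bot']
    rintro ⟨⟨p, hp⟩, ⟨q, hq⟩⟩ h
    have hi : p * v i + q * w i = 0 := congrFun h i
    have hj : p * v j + q * w j = 0 := congrFun h j
    have hdet : v i * w j - v j * w i ≠ 0 := sub_ne_zero.2 hne
    have hp0 : p = 0 := (mul_eq_zero_iff_right hdet).1 (by linear_combination w j * hi - w i * hj)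
    have hq0 : q = 0 := (mul_eq_zero_iff_right hdet).1 (by linear_combination v i * hj - v j * hi)
    simp only [hp0, hq0, Submodule.mk_eq_zero, Prod.mk_eq_zero, and_self]
  have hle := LinearMap.finrank_le_finrank_of_injective hinj
  rw [finrank_prod, finrank_degLE, finrank_degLE] at hle
  rw [eulerChar_eq, hcard] at hD
  push_cast at hD
  linarith [Int.self_le_toNat (D - d + 1), Int.self_le_toNat (D - e + 1)]

omit [Fintype ι] in
lemma finrank_X_smul (N : Submodule k (ι → k[X])) :
    finrank k ((Polynomial.X : k[X]) • N : Submodule k (ι → k[X])) = finrank k N :=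
  (Submodule.equivMapOfInjective (DistribSMul.toLinearMap k (ι → k[X]) (Polynomial.X : k[X]))
    (smul_right_injective _ Polynomial.X_ne_zero) N).finrank_eq.symm

lemma finrank_kerDegLE_sup_X_smul :
    finrank k (kerDegLE a Ψ d ⊔ (Polynomial.X : k[X]) • kerDegLE a Ψ d : Submodule k _) +
      finrank k (kerDegLE a Ψ (d - 1)) = 2 * finrank k (kerDegLE a Ψ d) := by
  have : FiniteDimensional k ((Polynomial.X : k[X]) • kerDegLE a Ψ d : Submodule k _) :=
    Module.Finite.map _ _
  have h := Submodule.finrank_sup_add_finrank_inf_eq (kerDegLE a Ψ d)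
    ((Polynomial.X : k[X]) • kerDegLE a Ψ d)
  rwa [kerDegLE_inf_X_smul, finrank_X_smul, finrank_X_smul, ← two_mul] at h

lemma two_mul_finrank_kerDegLE_le : 2 * finrank k (kerDegLE a Ψ d) ≤
    finrank k (kerDegLE a Ψ (d + 1)) + finrank k (kerDegLE a Ψ (d - 1)) := by
  rw [← finrank_kerDegLE_sup_X_smul]
  exact Nat.add_le_add_right (Submodule.finrank_mono kerDegLE_sup_X_smul_le) _

lemma kerDegLE_sup_X_smul_eq (h : 2 * finrank k (kerDegLE a Ψ d) =
      finrank k (kerDegLE a Ψ (d + 1)) + finrank k (kerDegLE a Ψ (d - 1))) :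
    kerDegLE a Ψ d ⊔ (Polynomial.X : k[X]) • kerDegLE a Ψ d = kerDegLE a Ψ (d + 1) := by
  rw [← finrank_kerDegLE_sup_X_smul, Nat.add_right_cancel_iff] at h
  exact Submodule.eq_of_le_of_finrank_eq kerDegLE_sup_X_smul_le h

end Field

lemma eq_zero_of_concave_of_eventually_eq_zero {γ : ℤ → ℤ}
    (hconcave : ∀ d, γ (d + 1) + γ (d - 1) ≤ 2 * γ d) (hev : ∀ᶠ d in Filter.atTop, γ d = 0)
    {d e : ℤ} (he : -1 ≤ γ e) (hed : e < d) : γ d = 0 := by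
  obtain ⟨D, hD⟩ := Filter.eventually_atTop.1 hev
  have hanti : Antitone fun d => γ (d + 1) - γ d := antitone_int_of_succ_le fun d => by
    have := hconcave (d + 1)
    rw [add_sub_cancel_right] at this
    linarith
  have hmono : Monotone γ := monotone_int_of_le_succ fun d => by
    have := hanti (le_max_left d D)
    have hmax := le_max_right d D
    simp only [hD _ hmax, hD _ (hmax.trans (Int.le_add_one le_rfl))] at this
    linarith
  have hnonpos (d : ℤ) : γ d ≤ 0 := (hmono (le_max_left d D)).trans_eq (hD _ (le_max_right d D))
  suffices h : γ (e + 1) = 0 from le_antisymm (hnonpos d) (h ▸ hmono hed)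
  by_contra hne
  have hneg : γ (e + 1) < 0 := (hnonpos _).lt_of_ne hne
  have hle : γ e ≤ γ (e + 1) := hmono (Int.le_add_one le_rfl)
  have hconst : ∀ d, e ≤ d → γ d ≤ γ e := fun d hd => by
    induction d, hd using Int.leInduction with
    | base => rfl
    | succ d hd ih =>
      have := hanti hd
      simp only at this
      omega
  have hmax := hconst (max e D) (le_max_left e D)
  rw [hD _ (le_max_right e D)] at hmax
  omega

section Field

open Module

variable [Fintype κ] {k : Type*} [Field k] {a : ι → ℤ} {b : κ → ℤ} {Ψ : Matrix κ ι k[X]} {d e : ℤ}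

lemma finrank_kerDegLE_of_eq_bot (hΨ : ∀ j i, Ψ j i ∈ degLE k (a i - b j))
    (hs : ∀ᶠ d in Filter.atTop, SurjInDegree a b Ψ d) (hbot : kerDegLE a Ψ e = ⊥)
    (he : -1 ≤ eulerChar a b e) (hed : e < d) :
    (finrank k (kerDegLE a Ψ d) : ℤ) = eulerChar a b d := by
  let γ (d : ℤ) : ℤ := eulerChar a b d - finrank k (kerDegLE a Ψ d)
  have hconcave (d : ℤ) : γ (d + 1) + γ (d - 1) ≤ 2 * γ d := by
    have := two_mul_finrank_kerDegLE_le (a := a) (Ψ := Ψ) (d := d)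
    simp only [γ, eulerChar_eq]
    linarith
  have hev : ∀ᶠ d in Filter.atTop, γ d = 0 :=
    (eventually_finrank_kerDegLE hΨ hs).mono fun d hd => sub_eq_zero.2 hd.symm
  have hγe : -1 ≤ γ e := by
    simp only [γ]
    rwa [hbot, finrank_bot, Nat.cast_zero, sub_zero]
  exact (sub_eq_zero.1 (eq_zero_of_concave_of_eventually_eq_zero hconcave hev hγe hed)).symm

lemma surjInDegree_of_kerDegLE_eq_bot (hΨ : ∀ j i, Ψ j i ∈ degLE k (a i - b j))
    (hs : ∀ᶠ d in Filter.atTop, SurjInDegree a b Ψ d) (hbot : kerDegLE a Ψ e = ⊥)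
    (he : -1 ≤ eulerChar a b e) (hed : e < d) : SurjInDegree a b Ψ d := by
  obtain ⟨D, hD, hdD⟩ := (hs.and (Filter.eventually_ge_atTop d)).exists
  induction d, hdD using Int.leInductionDown with
  | base => exact hD
  | pred d _ ih =>
    have hdim (d : ℤ) (hd : e < d) := finrank_kerDegLE_of_eq_bot hΨ hs hbot he hd
    have hgen : kerDegLE a Ψ d ⊔ (Polynomial.X : k[X]) • kerDegLE a Ψ d =
        kerDegLE a Ψ (d + 1) := by
      apply kerDegLE_sup_X_smul_eq
      zify
      rw [hdim _ (by omega), hdim _ (by omega), hdim _ hed]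
      simp only [eulerChar_eq]
      ring
    apply SurjInDegree.of_add_one <;> rw [sub_add_cancel]
    exacts [hgen, ih (by omega)]

end Field

end KernelOnLine

section GenericInjectivity

section Matrix

variable {A : Type*} [CommRing A] [IsDomain A] {I J : Type*} [Fintype I]

lemma exists_mul_eq_smul_one_of_mulVec_injective [DecidableEq I] [Fintype J] {T : Matrix J I A}
    (hT : Function.Injective T.mulVec) :
    ∃ Q : A, Q ≠ 0 ∧ ∃ S : Matrix I J A, S * T = Q • 1 := by
  classical
  let F := FractionRing A
  let T' : Matrix J I F := T.map (algebraMap A F)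
  have hindep : LinearIndependent F T'.col :=
    (LinearIndependent.iff_fractionRing A F).1 <|
      (Matrix.mulVec_injective_iff.1 hT).map' ((Algebra.linearMap A F).compLeft J) <|
        LinearMap.ker_eq_bot.2 (IsFractionRing.injective A F).comp_left
  obtain ⟨g, hg⟩ := T'.mulVecLin.exists_leftInverse_of_injective <|
    LinearMap.ker_eq_bot.2 (Matrix.mulVec_injective_iff.2 hindep)
  have hS : LinearMap.toMatrix' g * T' = 1 := by
    rw [← LinearMap.toMatrix'_toLin' T', ← LinearMap.toMatrix'_comp, Matrix.toLin'_apply', hg,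
      LinearMap.toMatrix'_id]
  obtain ⟨⟨Q, hQ⟩, hQS⟩ := IsLocalization.exist_integer_multiples_of_finite (nonZeroDivisors A)
    fun x : I × J => LinearMap.toMatrix' g x.1 x.2
  choose S hS' using hQS
  refine ⟨Q, nonZeroDivisors.ne_zero hQ, Matrix.of fun i j => S (i, j), ?_⟩
  apply Matrix.map_injective (IsFractionRing.injective A F)
  have hmap : (Matrix.of fun i j => S (i, j)).map (algebraMap A F) =
      Q • LinearMap.toMatrix' g := by
    ext i j
    exact hS' (i, j)
  beta_reduce
  rw [Matrix.map_mul, hmap, Matrix.smul_mul, hS]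
  ext i j
  rw [Matrix.map_apply, Matrix.smul_apply, Matrix.smul_apply, Matrix.one_apply, Matrix.one_apply]
  split_ifs <;> simp [Algebra.smul_def]

lemma exists_ne_zero_forall_map_mulVec_injective [Finite J] {T : Matrix J I A}
    (hT : Function.Injective T.mulVec) (B : Type*) [CommRing B] [IsDomain B] :
    ∃ Q : A, Q ≠ 0 ∧ ∀ f : A →+* B, f Q ≠ 0 → Function.Injective (T.map f).mulVec := by
  classical
  have := Fintype.ofFinite J
  obtain ⟨Q, hQ, S, hS⟩ := exists_mul_eq_smul_one_of_mulVec_injective hT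
  refine ⟨Q, hQ, fun f hf v w hvw => ?_⟩
  have hST : S.map f * T.map f = f Q • 1 := by
    rw [← Matrix.map_mul, hS]
    ext i j
    simp [Matrix.one_apply, apply_ite f]
  have h := congrArg (S.map f).mulVec hvw
  rw [Matrix.mulVec_mulVec, Matrix.mulVec_mulVec, hST, Matrix.smul_mulVec, Matrix.smul_mulVec,
    Matrix.one_mulVec, Matrix.one_mulVec] at h
  exact smul_right_injective _ hf h

end Matrix

variable {A : Type*} [CommRing A] {ι κ : Type*} [Fintype ι]
  {a : ι → ℤ} {b : κ → ℤ} {Ψ : Matrix κ ι A[X]} {d : ℤ}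

/-- The matrix, in the monomial bases, of `Ψ : ⊕ 𝒪(-a i) → ⊕ 𝒪(-b j)` on global sections in
degree `d`. -/
def coeffMatrix (a : ι → ℤ) (b : κ → ℤ) (Ψ : Matrix κ ι A[X]) (d : ℤ) :
    Matrix (CoeffIndex b d) (CoeffIndex a d) A :=
  Matrix.of fun y x => (Ψ y.1 x.1 * Polynomial.X ^ (x.2 : ℕ)).coeff y.2

omit [Fintype ι] in
lemma coeffMatrix_map {B : Type*} [CommRing B] (f : A →+* B) :
    (coeffMatrix a b Ψ d).map f = coeffMatrix a b (Ψ.map (Polynomial.map f)) d := by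
  ext y x
  simp only [coeffMatrix, Matrix.map_apply, Matrix.of_apply, ← Polynomial.coeff_map,
    Polynomial.map_mul, Polynomial.map_pow, Polynomial.map_X]

lemma coeffMatrix_mulVec_coeffEquiv (v : tupleDegLE (A := A) a d) (y : CoeffIndex b d) :
    (coeffMatrix a b Ψ d).mulVec (coeffEquiv A a d v) y = (Ψ.mulVec v.1 y.1).coeff y.2 := by
  simp only [Matrix.mulVec, dotProduct, Polynomial.finsetSum_coeff, Fintype.sum_sigma,
    coeffMatrix, Matrix.of_apply, coeffEquiv_apply]
  refine Finset.sum_congr rfl fun i _ => ?_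
  conv_rhs => rw [eq_sum_of_mem_degLE (mem_tupleDegLE.1 v.2 i), Finset.mul_sum]
  rw [Polynomial.finsetSum_coeff]
  refine Finset.sum_congr rfl fun l _ => ?_
  rw [mul_left_comm, Polynomial.coeff_C_mul, mul_comm]

lemma coeffMatrix_mulVec_injective_iff (hΨ : ∀ j i, Ψ j i ∈ degLE A (a i - b j)) :
    Function.Injective (coeffMatrix a b Ψ d).mulVec ↔ kerDegLE a Ψ d = ⊥ := by
  have hker (v : tupleDegLE (A := A) a d) :
      (coeffMatrix a b Ψ d).mulVec (coeffEquiv A a d v) = 0 ↔ v.1 ∈ kerDegLE a Ψ d := by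
    have hcoeff : (coeffMatrix a b Ψ d).mulVec (coeffEquiv A a d v) =
        coeffEquiv A b d ⟨Ψ.mulVec v.1, mulVec_mem_tupleDegLE hΨ v.2⟩ :=
      funext fun y => coeffMatrix_mulVec_coeffEquiv v y
    rw [hcoeff, LinearEquiv.map_eq_zero_iff, Submodule.mk_eq_zero, mem_kerDegLE, and_iff_right v.2]
  rw [← Matrix.coe_mulVecLin, injective_iff_map_eq_zero, Submodule.eq_bot_iff]
  refine ⟨fun h v hv => ?_, fun h c hc => ?_⟩
  · have := h _ ((hker ⟨v, hv.1⟩).2 hv)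
    simpa using this
  · obtain ⟨v, rfl⟩ := (coeffEquiv A a d).surjective c
    rw [(Submodule.coe_eq_zero (x := v)).1 (h v.1 ((hker v).1 hc)), map_zero]

lemma exists_ne_zero_forall_kerDegLE_map_eq_bot [Finite κ] [IsDomain A]
    (hΨ : ∀ j i, Ψ j i ∈ degLE A (a i - b j)) (hbot : kerDegLE a Ψ d = ⊥)
    (B : Type*) [CommRing B] [IsDomain B] :
    ∃ Q : A, Q ≠ 0 ∧ ∀ f : A →+* B, f Q ≠ 0 →
      kerDegLE a (Ψ.map (Polynomial.map f)) d = ⊥ := by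
  obtain ⟨Q, hQ, h⟩ := exists_ne_zero_forall_map_mulVec_injective
    ((coeffMatrix_mulVec_injective_iff hΨ).2 hbot) B
  refine ⟨Q, hQ, fun f hf => ?_⟩
  rw [← coeffMatrix_mulVec_injective_iff (b := b), ← coeffMatrix_map]
  exacts [h f hf, fun j i => map_mem_degLE f (hΨ j i)]

end GenericInjectivity

section HomogeneousForms

variable {K : Type*} [Field K]

section Restriction

variable {A : Type*} [CommRing A] [Algebra K A]

/-- Restriction of forms to the line `z = u 0 * x + u 1 * y`, in the chart `y = 1` of that line. For
`u = X` this is the generic line, over `A = K[s, t]`. -/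
def restrictLine (u : Fin 2 → A) : MvPolynomial (Fin 3) K →ₐ[K] A[X] :=
  aeval ![Polynomial.X, 1, Polynomial.C (u 0) * Polynomial.X + Polynomial.C (u 1)]

lemma restrictLine_mem_degLE (u : Fin 2 → A) {d : ℤ} {p : MvPolynomial (Fin 3) K}
    (hp : homog p d) : restrictLine u p ∈ degLE A d := by
  refine aeval_mem_degLE (fun i => ?_) hp
  fin_cases i
  · exact_mod_cast mem_degLE_of_natDegree_le Polynomial.natDegree_X_le
  · exact degLE_mono zero_le_one (C_mem_degLE 1)
  · exact_mod_cast mem_degLE_of_natDegree_le Polynomial.natDegree_linear_le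

lemma map_restrictLine {B : Type*} [CommRing B] [Algebra K B] (f : A →ₐ[K] B) (u : Fin 2 → A)
    (p : MvPolynomial (Fin 3) K) :
    (restrictLine u p).map (f : A →+* B) = restrictLine (f ∘ u) p := by
  have h : (Polynomial.mapAlgHom f).comp (restrictLine u) = restrictLine (f ∘ u) := by
    refine MvPolynomial.algHom_ext fun i => ?_
    fin_cases i <;> simp [restrictLine]
  exact DFunLike.congr_fun h p

lemma exists_homog_restrictLine_eq (u : Fin 2 → K) {d : ℤ} {g : K[X]} (hg : g ∈ degLE K d) :
    ∃ p : MvPolynomial (Fin 3) K, homog p d ∧ restrictLine u p = g := by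
  refine ⟨∑ l : Fin (d + 1).toNat, C (g.coeff l) * (X 0 ^ (l : ℕ) * X 1 ^ (d - l).toNat), ?_, ?_⟩
  · refine IsWeightedHomogeneous.sum _ _ _ fun l _ => IsWeightedHomogeneous.C_mul ?_ _
    convert ((isWeightedHomogeneous_X K _ 0).pow (l : ℕ)).mul
      ((isWeightedHomogeneous_X K (fun _ : Fin 3 => (1 : ℤ)) 1).pow (d - l).toNat) using 1
    simp only [nsmul_eq_mul, mul_one]
    omega
  · conv_rhs => rw [eq_sum_of_mem_degLE hg]
    simp [restrictLine, algHom_C]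

end Restriction

section Evaluation

lemma eval_smul_of_isWeightedHomogeneous {σ : Type*} [Finite σ] {d : ℤ} {p : MvPolynomial σ K}
    (hp : IsWeightedHomogeneous (fun _ => (1 : ℤ)) p d) (l : K) (x : σ → K) :
    eval (l • x) p = l ^ d * eval x p := by
  have := Fintype.ofFinite σ
  rw [eval_eq', eval_eq', Finset.mul_sum]
  refine Finset.sum_congr rfl fun u hu => ?_
  have hdeg : ((∑ i, u i : ℕ) : ℤ) = d := by
    rw [← hp (mem_support_iff.1 hu), Finsupp.weight_apply, Finsupp.sum_fintype _ _ (by simp)]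
    simp
  simp only [Pi.smul_apply, smul_eq_mul, mul_pow, Finset.prod_mul_distrib,
    Finset.prod_pow_eq_pow_sum, ← hdeg, zpow_natCast]
  ring

lemma eq_zero_of_forall_eval_eq_zero_of_ne {σ : Type*} [Infinite K] {g p : MvPolynomial σ K}
    (hg : g ≠ 0) (h : ∀ x, eval x g ≠ 0 → eval x p = 0) : p = 0 := by
  refine (mul_eq_zero.1 (MvPolynomial.funext fun x => ?_ : g * p = 0)).resolve_left hg
  rw [map_mul, map_zero, mul_eq_zero]
  exact or_iff_not_imp_left.2 (h x)

lemma eval_eq_zero_of_restrictLine_eq_zero {u : Fin 2 → K} {d : ℤ} {p : MvPolynomial (Fin 3) K}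
    (hp : homog p d) (h : restrictLine u p = 0) (x : K) {y : K} (hy : y ≠ 0) :
    eval ![x, y, u 0 * x + u 1 * y] p = 0 := by
  have hx : ![x, y, u 0 * x + u 1 * y] = y • ![x / y, 1, u 0 * (x / y) + u 1] := by
    ext i
    fin_cases i <;> simp <;> field_simp
  have heval : (Polynomial.aeval (x / y)).comp (restrictLine u) =
      (aeval ![x / y, 1, u 0 * (x / y) + u 1] : MvPolynomial (Fin 3) K →ₐ[K] K) := by
    refine MvPolynomial.algHom_ext fun i => ?_
    fin_cases i <;> simp [restrictLine]
  rw [hx, eval_smul_of_isWeightedHomogeneous hp, ← aeval_eq_eval, ← heval, AlgHom.comp_apply, h,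
    map_zero, mul_zero]

end Evaluation

section Division

lemma exists_isWeightedHomogeneous_eq_mul_of_dvd {R σ M : Type*} [CommRing R] [AddCommGroup M]
    {w : σ → M} {d e : M} {p q : MvPolynomial σ R} (hp : IsWeightedHomogeneous w p d)
    (hq : IsWeightedHomogeneous w q e) (h : q ∣ p) :
    ∃ r, IsWeightedHomogeneous w r (d - e) ∧ p = q * r := by
  classical
  obtain ⟨r, rfl⟩ := h
  let := weightedGradedAlgebra R w
  refine ⟨_, (DirectSum.decompose (weightedHomogeneousSubmodule R w) r (d - e)).2, ?_⟩
  rw [← DirectSum.coe_decompose_mul_add_of_left_mem _ hq, add_sub_cancel,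
    DirectSum.decompose_of_mem_same _ hp]

/-- The slopes `u` for which the line `linform c = 0` is `z = u 0 * x + u 1 * y`, provided
`c 2 ≠ 0`. -/
def slopes (c : Fin 3 → K) : Fin 2 → K := fun i => -c i.castSucc / c 2

variable {c : Fin 3 → K}

lemma linform_ne_zero (hc : c 2 ≠ 0) : linform c ≠ 0 := fun h => hc <| by
  simpa [linform, Fin.sum_univ_three] using congrArg (eval ![0, 0, 1]) h

lemma linform_eq (hc : c 2 ≠ 0) :
    linform c = C (c 2) * (X 2 - (C (slopes c 0) * X 0 + C (slopes c 1) * X 1)) := by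
  have h0 : c 2 * slopes c 0 = -c 0 := mul_div_cancel₀ _ hc
  have h1 : c 2 * slopes c 1 = -c 1 := mul_div_cancel₀ _ hc
  rw [mul_sub, mul_add, ← mul_assoc, ← mul_assoc, ← C_mul, ← C_mul, h0, h1, linform,
    Fin.sum_univ_three, C_neg, C_neg]
  ring

lemma restrictLine_slopes_linform (hc : c 2 ≠ 0) : restrictLine (slopes c) (linform c) = 0 := by
  simp [linform_eq hc, restrictLine, algHom_C]

lemma linform_dvd_of_restrictLine_eq_zero [Infinite K] (hc : c 2 ≠ 0) {d : ℤ}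
    {p : MvPolynomial (Fin 3) K} (hp : homog p d) (h : restrictLine (slopes c) p = 0) :
    linform c ∣ p := by
  let z : MvPolynomial (Fin 3) K := C (slopes c 0) * X 0 + C (slopes c 1) * X 1
  have hsubst : aeval ![X 0, X 1, z] p = 0 := by
    refine eq_zero_of_forall_eval_eq_zero_of_ne (X_ne_zero 1) fun x hx => ?_
    rw [eval_X] at hx
    have heval : (aeval x).comp (aeval ![X 0, X 1, z]) =
        (aeval ![x 0, x 1, slopes c 0 * x 0 + slopes c 1 * x 1] :
          MvPolynomial (Fin 3) K →ₐ[K] K) := by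
      refine MvPolynomial.algHom_ext fun i => ?_
      fin_cases i <;> simp [z]
    rw [← eval_eq_zero_of_restrictLine_eq_zero hp h (x 0) hx, ← aeval_eq_eval, ← aeval_eq_eval]
    exact DFunLike.congr_fun heval p
  have hmod : (Ideal.Quotient.mkₐ K (Ideal.span {linform c})).comp (aeval ![X 0, X 1, z]) =
      Ideal.Quotient.mkₐ K (Ideal.span {linform c}) := by
    refine MvPolynomial.algHom_ext fun i => ?_
    fin_cases i
    · simp
    · simp
    · refine (Ideal.Quotient.eq.2 (Ideal.mem_span_singleton'.2 ⟨C (-(c 2)⁻¹), ?_⟩))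
      simp [linform_eq hc, z, ← mul_assoc, ← C_mul, hc]
  have hp := DFunLike.congr_fun hmod p
  rw [AlgHom.comp_apply, hsubst, map_zero] at hp
  exact Ideal.mem_span_singleton.1 (Ideal.Quotient.eq_zero_iff_mem.1 hp.symm)

end Division

end HomogeneousForms

section Incidence

variable {K : Type*} [Field K]

variable (K) in
/-- Dehomogenization in the chart `y = 1`. -/
def chart : MvPolynomial (Fin 3) K →ₐ[K] MvPolynomial (Fin 2) K :=
  aeval ![X 0, 1, X 1]

lemma exists_homog_chart_eq {d : ℤ} {r : MvPolynomial (Fin 2) K}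
    (hr : ∀ u, coeff u r ≠ 0 → (u 0 + u 1 : ℤ) ≤ d) :
    ∃ p : MvPolynomial (Fin 3) K, homog p d ∧ chart K p = r := by
  refine ⟨∑ u ∈ r.support, C (coeff u r) *
    (X 0 ^ u 0 * X 1 ^ (d - u 0 - u 1).toNat * X 2 ^ u 1), ?_, ?_⟩
  · refine IsWeightedHomogeneous.sum _ _ _ fun u hu => IsWeightedHomogeneous.C_mul ?_ _
    have hX (i : Fin 3) := isWeightedHomogeneous_X K (fun _ : Fin 3 => (1 : ℤ)) i
    have hle := hr u (mem_support_iff.1 hu)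
    convert (((hX 0).pow (u 0)).mul ((hX 1).pow (d - u 0 - u 1).toNat)).mul ((hX 2).pow (u 1))
      using 1
    simp only [nsmul_eq_mul, mul_one]
    omega
  · conv_rhs => rw [r.as_sum]
    simp [chart, algHom_C, monomial_eq, Finsupp.prod_fintype]

section EvalBundle

variable {B : Type*} [CommRing B] [Algebra K B]

/-- Evaluation of polynomials over `K[X 0, X 1]` at a point `x` over `u`. -/
def evalOver (u : Fin 2 → B) (x : B) : (MvPolynomial (Fin 2) K)[X] →ₐ[K] B :=
  Polynomial.eval₂AlgHom (aeval u) x fun _ => Commute.all _ _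

@[simp]
lemma evalOver_C (u : Fin 2 → B) (x : B) (r : MvPolynomial (Fin 2) K) :
    evalOver u x (Polynomial.C r) = aeval u r := by
  simp [evalOver]

@[simp]
lemma evalOver_X (u : Fin 2 → B) (x : B) : evalOver (K := K) u x Polynomial.X = x := by
  simp [evalOver]

lemma evalOver_hom_ext {f g : (MvPolynomial (Fin 2) K)[X] →ₐ[K] B}
    (hC : ∀ i, f (Polynomial.C (X i)) = g (Polynomial.C (X i)))
    (hX : f Polynomial.X = g Polynomial.X) : f = g :=
  Polynomial.algHom_ext' (MvPolynomial.algHom_ext hC) hX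

end EvalBundle

variable (K) in
/-- The two coordinate systems `(x, z; s)` and `(s, t; x)`, related by `z = s * x + t`, on the
variety of pairs consisting of a point `(x, 1, z)` and a line `z = s * x + t * y` through it. -/
def incidenceEquiv : (MvPolynomial (Fin 2) K)[X] ≃ₐ[K] (MvPolynomial (Fin 2) K)[X] :=
  AlgEquiv.ofAlgHom
    (evalOver ![Polynomial.X, Polynomial.C (X 0) * Polynomial.X + Polynomial.C (X 1)]
      (Polynomial.C (X 0)))
    (evalOver ![Polynomial.X, Polynomial.C (X 1) - Polynomial.X * Polynomial.C (X 0)]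
      (Polynomial.C (X 0)))
    (evalOver_hom_ext (Fin.forall_fin_two.2 (by simp)) (by simp))
    (evalOver_hom_ext (Fin.forall_fin_two.2 (by simp)) (by simp))

lemma incidenceEquiv_C (r : MvPolynomial (Fin 2) K) : incidenceEquiv K (Polynomial.C r) =
    aeval ![Polynomial.X, Polynomial.C (X 0) * Polynomial.X + Polynomial.C (X 1)] r :=
  evalOver_C _ _ r

lemma incidenceEquiv_symm_C (r : MvPolynomial (Fin 2) K) :
    (incidenceEquiv K).symm (Polynomial.C r) =
      aeval ![Polynomial.X, Polynomial.C (X 1) - Polynomial.X * Polynomial.C (X 0)] r :=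
  evalOver_C _ _ r

lemma incidenceEquiv_C_chart (p : MvPolynomial (Fin 3) K) :
    incidenceEquiv K (Polynomial.C (chart K p)) = restrictLine X p := by
  have h : (aeval ![Polynomial.X, Polynomial.C (X 0) * Polynomial.X + Polynomial.C (X 1)]).comp
      (chart K) = restrictLine (X : Fin 2 → MvPolynomial (Fin 2) K) := by
    refine MvPolynomial.algHom_ext fun i => ?_
    fin_cases i <;> simp [restrictLine, chart]
  rw [incidenceEquiv_C]
  exact DFunLike.congr_fun h p

/-- At `t = 0` the monomial `x ^ i * z ^ j` becomes `s ^ j * x ^ (i + j)`, so distinct monomials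
stay distinct. -/
lemma coeff_coeff_map_incidenceEquiv_C (r : MvPolynomial (Fin 2) K) (u : Fin 2 →₀ ℕ) :
    (((incidenceEquiv K (Polynomial.C r)).map
      (aeval ![Polynomial.X, 0] : MvPolynomial (Fin 2) K →ₐ[K] K[X]).toRingHom).coeff
        (u 0 + u 1)).coeff (u 1) = coeff u r := by
  induction r using MvPolynomial.induction_on' with
  | monomial v c =>
    have huv : v = u ↔ u 0 + u 1 = v 0 + v 1 ∧ u 1 = v 1 := by
      rw [Finsupp.ext_iff, Fin.forall_fin_two]
      omega
    have hv : (incidenceEquiv K (Polynomial.C (monomial v c))).map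
        (aeval ![Polynomial.X, 0] : MvPolynomial (Fin 2) K →ₐ[K] K[X]).toRingHom =
          Polynomial.C (Polynomial.C c * Polynomial.X ^ v 1) * Polynomial.X ^ (v 0 + v 1) := by
      rw [incidenceEquiv_C, aeval_monomial, Finsupp.prod_fintype _ _ (by simp)]
      simp only [AlgHom.toRingHom_eq_coe, Polynomial.algebraMap_apply, algebraMap_eq,
        Fin.prod_univ_two, Matrix.cons_val_zero, Matrix.cons_val_one, Polynomial.map_mul,
        Polynomial.map_C, RingHom.coe_coe, algHom_C, Polynomial.algebraMap_eq, Polynomial.map_pow,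
        Polynomial.map_X, Polynomial.map_add, aeval_X, map_zero, add_zero, map_mul, map_pow]
      ring
    rw [hv, Polynomial.coeff_C_mul_X_pow, coeff_monomial]
    simp only [huv, apply_ite (Polynomial.coeff · (u 1)), Polynomial.coeff_C_mul_X_pow,
      Polynomial.coeff_zero, ite_and]
  | add p q hp hq =>
    simp only [map_add, Polynomial.map_add, Polynomial.coeff_add, hp, hq, coeff_add]

lemma exists_homog_restrictLine_eq_incidenceEquiv_C {d : ℤ} {r : MvPolynomial (Fin 2) K}
    (hr : incidenceEquiv K (Polynomial.C r) ∈ degLE (MvPolynomial (Fin 2) K) d) :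
    ∃ p : MvPolynomial (Fin 3) K,
      homog p d ∧ restrictLine X p = incidenceEquiv K (Polynomial.C r) := by
  have hdeg (u : Fin 2 →₀ ℕ) (hu : coeff u r ≠ 0) : (u 0 + u 1 : ℤ) ≤ d := by
    by_contra! hlt
    rw [← coeff_coeff_map_incidenceEquiv_C, mem_degLE.1 (map_mem_degLE _ hr) _ (by simpa using hlt),
      Polynomial.coeff_zero] at hu
    exact hu rfl
  obtain ⟨p, hp, rfl⟩ := exists_homog_chart_eq hdeg
  exact ⟨p, hp, (incidenceEquiv_C_chart p).symm⟩

variable (K) in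
/-- The derivation `∂/∂s` in the coordinates `(x, z; s)`, which moves a line while keeping one of
its points fixed. In the coordinates `(s, t; x)` it is `∂/∂s - x ∂/∂t`. -/
def pencilDeriv : Derivation K (MvPolynomial (Fin 2) K)[X] (MvPolynomial (Fin 2) K)[X] :=
  Derivation.mk' ((incidenceEquiv K).toLinearMap ∘ₗ
    (Polynomial.derivative.restrictScalars K) ∘ₗ (incidenceEquiv K).symm.toLinearMap) fun p q => by
      simp only [LinearMap.coe_comp, LinearEquiv.coe_coe, AlgEquiv.coe_toLinearEquiv,
        LinearMap.coe_restrictScalars, AlgEquiv.toLinearEquiv_symm, AlgEquiv.coe_symm_toLinearEquiv,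
        Function.comp_apply, map_mul, Polynomial.derivative_mul, map_add,
        AlgEquiv.apply_symm_apply, smul_eq_mul]
      ring

lemma pencilDeriv_apply (p : (MvPolynomial (Fin 2) K)[X]) : pencilDeriv K p =
    incidenceEquiv K (Polynomial.derivative ((incidenceEquiv K).symm p)) := rfl

lemma pencilDeriv_restrictLine (p : MvPolynomial (Fin 3) K) :
    pencilDeriv K (restrictLine X p) = 0 := by
  rw [pencilDeriv_apply, ← incidenceEquiv_C_chart, AlgEquiv.symm_apply_apply,
    Polynomial.derivative_C, map_zero]

lemma pencilDeriv_X : pencilDeriv K Polynomial.X = 0 := by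
  simpa [restrictLine] using pencilDeriv_restrictLine (X 0 : MvPolynomial (Fin 3) K)

lemma pencilDeriv_C_X_zero : pencilDeriv K (Polynomial.C (X 0)) = 1 := by
  simp [pencilDeriv_apply, incidenceEquiv_symm_C]

lemma pencilDeriv_C_X_one : pencilDeriv K (Polynomial.C (X 1)) = -Polynomial.X := by
  simp [pencilDeriv_apply, incidenceEquiv_symm_C, incidenceEquiv_C]

lemma pencilDeriv_C_mem_degLE (r : MvPolynomial (Fin 2) K) :
    pencilDeriv K (Polynomial.C r) ∈ degLE (MvPolynomial (Fin 2) K) 1 := by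
  induction r using MvPolynomial.induction_on with
  | C c =>
    have h : pencilDeriv K (Polynomial.C (C c)) = 0 := (pencilDeriv K).map_algebraMap c
    exact h ▸ Submodule.zero_mem _
  | add p q hp hq =>
    rw [Polynomial.C_add, map_add]
    exact Submodule.add_mem _ hp hq
  | mul_X p i hp =>
    have hX : pencilDeriv K (Polynomial.C (X i)) ∈ degLE (MvPolynomial (Fin 2) K) 1 := by
      fin_cases i
      · exact pencilDeriv_C_X_zero (K := K) ▸ degLE_mono zero_le_one (C_mem_degLE 1)
      · exact pencilDeriv_C_X_one (K := K) ▸ neg_mem (mod_cast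
          mem_degLE_of_natDegree_le Polynomial.natDegree_X_le)
    rw [Polynomial.C_mul, Derivation.leibniz, smul_eq_mul, smul_eq_mul]
    have h (q r) (hr : r ∈ degLE (MvPolynomial (Fin 2) K) 1) : Polynomial.C q * r ∈ degLE _ 1 := by
      simpa only [zero_add] using mul_mem_degLE (C_mem_degLE q) hr
    exact Submodule.add_mem _ (h _ _ hX) (h _ _ hp)

lemma pencilDeriv_mem_degLE {e : ℤ} {p : (MvPolynomial (Fin 2) K)[X]} (hp : p ∈ degLE _ e) :
    pencilDeriv K p ∈ degLE _ (e + 1) := by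
  rw [eq_sum_of_mem_degLE hp, map_sum]
  refine Submodule.sum_mem _ fun l _ => ?_
  rw [Derivation.leibniz, Derivation.leibniz_pow, pencilDeriv_X, smul_zero, smul_zero, smul_zero,
    zero_add, smul_eq_mul]
  refine degLE_mono ?_ (mul_mem_degLE
    (mem_degLE_of_natDegree_le (Polynomial.natDegree_X_pow_le _)) (pencilDeriv_C_mem_degLE _))
  omega

lemma pencilDeriv_mem_kerDegLE {ι κ : Type*} [Fintype ι] {a : ι → ℤ}
    {Φ : Matrix κ ι (MvPolynomial (Fin 3) K)} {d : ℤ} {v : ι → (MvPolynomial (Fin 2) K)[X]}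
    (hv : v ∈ kerDegLE a (Φ.map (restrictLine X)) d) :
    pencilDeriv K ∘ v ∈ kerDegLE a (Φ.map (restrictLine X)) (d + 1) := by
  refine mem_kerDegLE.2 ⟨mem_tupleDegLE.2 fun i => ?_, funext fun j => ?_⟩
  · rw [add_sub_right_comm]
    exact pencilDeriv_mem_degLE (mem_tupleDegLE.1 hv.1 i)
  · have h := congrArg (pencilDeriv K) (congrFun (mem_kerDegLE.1 hv).2 j)
    simpa [Matrix.mulVec, dotProduct, Derivation.leibniz, pencilDeriv_restrictLine] using h

lemma pencilDeriv_eq_zero_of_dvd {p : (MvPolynomial (Fin 2) K)[X]} (h : p ∣ pencilDeriv K p) :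
    pencilDeriv K p = 0 := by
  by_cases hp : p = 0
  · rw [hp, map_zero]
  have hdvd : (incidenceEquiv K).symm p ∣ Polynomial.derivative ((incidenceEquiv K).symm p) := by
    simpa [pencilDeriv_apply] using map_dvd (incidenceEquiv K).symm h
  rw [pencilDeriv_apply, Polynomial.eq_zero_of_dvd_of_degree_lt hdvd
    (Polynomial.degree_derivative_lt (by simpa using hp)), map_zero]

lemma exists_homog_restrictLine_eq_of_pencilDeriv_eq_zero [CharZero K] {e : ℤ}
    {p : (MvPolynomial (Fin 2) K)[X]} (hp : p ∈ degLE _ e) (h : pencilDeriv K p = 0) :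
    ∃ q : MvPolynomial (Fin 3) K, homog q e ∧ restrictLine X q = p := by
  rw [pencilDeriv_apply, map_eq_zero_iff _ (incidenceEquiv K).injective] at h
  have hconst := Polynomial.eq_C_of_derivative_eq_zero h
  rw [AlgEquiv.symm_apply_eq] at hconst
  rw [hconst] at hp ⊢
  exact exists_homog_restrictLine_eq_incidenceEquiv_C hp

end Incidence

section GrauertMulich

lemma exists_primitive_eq_smul {R ι : Type*} [CommRing R] [IsDomain R]
    [UniqueFactorizationMonoid R] [Finite ι] {v : ι → R} (hv : v ≠ 0) :
    ∃ (g : R) (w : ι → R), g ≠ 0 ∧ v = g • w ∧ ∀ q x, (∀ i, q ∣ w i * x) → q ∣ x := by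
  classical
  have := Fintype.ofFinite ι
  let : StrongNormalizationMonoid R := UniqueFactorizationMonoid.strongNormalizationMonoid
  let : NormalizedGCDMonoid R := UniqueFactorizationMonoid.toNormalizedGCDMonoid R
  obtain ⟨i, hi⟩ := Function.ne_iff.1 hv
  obtain ⟨w, hw, hgcd⟩ := Finset.univ.extract_gcd v ⟨i, Finset.mem_univ _⟩
  refine ⟨Finset.univ.gcd v, w, fun h => hi (Finset.gcd_eq_zero_iff.1 h i (Finset.mem_univ _)),
    funext fun i => hw i (Finset.mem_univ _), fun q x h => ?_⟩
  have hdvd := (Finset.dvd_gcd fun i _ => h i).trans (Finset.gcd_mul_right' Finset.univ w x).dvd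
  rwa [hgcd, one_mul] at hdvd

lemma map_mem_kerDegLE {A B ι κ : Type*} [CommRing A] [CommRing B] [Fintype ι] (f : A →+* B)
    {a : ι → ℤ} {Ψ : Matrix κ ι A[X]} {d : ℤ} {v : ι → A[X]} (hv : v ∈ kerDegLE a Ψ d) :
    (Polynomial.map f ∘ v) ∈ kerDegLE a (Ψ.map (Polynomial.map f)) d := by
  refine mem_kerDegLE.2 ⟨mem_tupleDegLE.2 fun i => map_mem_degLE f (mem_tupleDegLE.1 hv.1 i),
    funext fun j => ?_⟩
  have h := RingHom.map_mulVec (Polynomial.mapRingHom f) Ψ v j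
  rw [(mem_kerDegLE.1 hv).2, Pi.zero_apply, map_zero] at h
  exact h.symm

variable {K : Type*} [Field K] {ι κ : Type*} {a : ι → ℤ} {b : κ → ℤ}
  {Φ : Matrix κ ι (MvPolynomial (Fin 3) K)} {d e : ℤ}

lemma map_eval_restrictLine_X (u : Fin 2 → K) (p : MvPolynomial (Fin 3) K) :
    (restrictLine (X : Fin 2 → MvPolynomial (Fin 2) K) p).map (eval u) = restrictLine u p := by
  have h := map_restrictLine (aeval u) (X : Fin 2 → MvPolynomial (Fin 2) K) p
  have hu : (aeval u : MvPolynomial (Fin 2) K →ₐ[K] K) ∘ X = u := funext (aeval_X u)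
  rwa [hu] at h

variable (Φ) in
lemma map_restrictLine_X_map_eval (u : Fin 2 → K) :
    (Φ.map (restrictLine X)).map (Polynomial.map (eval u)) = Φ.map (restrictLine u) :=
  Matrix.ext fun j i => map_eval_restrictLine_X u (Φ j i)

lemma eq_zero_of_restrictLine_X_eq_zero [Infinite K] {p : MvPolynomial (Fin 3) K}
    (hp : homog p d) (h : restrictLine (X : Fin 2 → MvPolynomial (Fin 2) K) p = 0) : p = 0 := by
  refine eq_zero_of_forall_eval_eq_zero_of_ne (X_ne_zero 1) fun x hx => ?_
  rw [eval_X] at hx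
  have hu : restrictLine ![0, x 2 / x 1] p = 0 := by
    rw [← map_eval_restrictLine_X, h, Polynomial.map_zero]
  have heval := eval_eq_zero_of_restrictLine_eq_zero hp hu (x 0) hx
  convert heval
  ext i
  fin_cases i <;> simp [hx]

variable [Fintype ι] [Fintype κ]

lemma mul_eq_mul_of_mem_kerDegLE_restrictLine_X [Infinite K]
    (hcard : Fintype.card ι = Fintype.card κ + 2) (hΦ : ∀ j i, homog (Φ j i) (a i - b j))
    (hs : ∀ u : Fin 2 → K, ∀ᶠ d in Filter.atTop, SurjInDegree a b (Φ.map (restrictLine u)) d)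
    (hde : d + e < ∑ i, a i - ∑ j, b j) {v w : ι → (MvPolynomial (Fin 2) K)[X]}
    (hv : v ∈ kerDegLE a (Φ.map (restrictLine X)) d)
    (hw : w ∈ kerDegLE a (Φ.map (restrictLine X)) e) (i j : ι) : v i * w j = v j * w i := by
  ext1 k
  refine MvPolynomial.funext fun u => ?_
  have hΦu := map_restrictLine_X_map_eval Φ u
  have h := mul_eq_mul_of_mem_kerDegLE hcard (fun j i => restrictLine_mem_degLE u (hΦ j i)) (hs u)
    hde (hΦu ▸ map_mem_kerDegLE (eval u) hv) (hΦu ▸ map_mem_kerDegLE (eval u) hw) i j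
  simp only [Function.comp_apply, ← Polynomial.map_mul] at h
  simpa only [Polynomial.coeff_map] using congrArg (Polynomial.coeff · k) h

lemma exists_mem_kerDegLE_pencilDeriv_eq_zero [Infinite K]
    (hcard : Fintype.card ι = Fintype.card κ + 2) (hΦ : ∀ j i, homog (Φ j i) (a i - b j))
    (hs : ∀ u : Fin 2 → K, ∀ᶠ d in Filter.atTop, SurjInDegree a b (Φ.map (restrictLine u)) d)
    (hd : 2 * d + 1 < ∑ i, a i - ∑ j, b j)
    (hker : kerDegLE a (Φ.map (restrictLine (X : Fin 2 → MvPolynomial (Fin 2) K))) d ≠ ⊥) :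
    ∃ w ∈ kerDegLE a (Φ.map (restrictLine (X : Fin 2 → MvPolynomial (Fin 2) K))) d,
      w ≠ 0 ∧ ∀ i, pencilDeriv K (w i) = 0 := by
  obtain ⟨v, hv, hv0⟩ := Submodule.exists_mem_ne_zero_of_ne_bot hker
  obtain ⟨g, w, hg, rfl, hprim⟩ := exists_primitive_eq_smul hv0
  have hw : w ∈ kerDegLE a (Φ.map (restrictLine X)) d := by
    refine mem_kerDegLE.2 ⟨mem_tupleDegLE.2 fun i =>
      mem_degLE_of_mul_mem hg (mem_tupleDegLE.1 hv.1 i), ?_⟩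
    exact smul_right_injective _ hg
      ((Matrix.mulVec_smul _ _ _).symm.trans ((mem_kerDegLE.1 hv).2.trans (smul_zero g).symm))
  refine ⟨w, hw, fun h => hv0 (by rw [h, smul_zero]), fun i => ?_⟩
  refine pencilDeriv_eq_zero_of_dvd (hprim _ _ fun j => ⟨pencilDeriv K (w j), ?_⟩)
  exact mul_eq_mul_of_mem_kerDegLE_restrictLine_X hcard hΦ hs (by omega) hw
    (pencilDeriv_mem_kerDegLE hw) j i

lemma exists_mulVec_eq_zero_of_kerDegLE_ne_bot [CharZero K]
    (hcard : Fintype.card ι = Fintype.card κ + 2) (hΦ : ∀ j i, homog (Φ j i) (a i - b j))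
    (hs : ∀ u : Fin 2 → K, ∀ᶠ d in Filter.atTop, SurjInDegree a b (Φ.map (restrictLine u)) d)
    (hd : 2 * d + 1 < ∑ i, a i - ∑ j, b j)
    (hker : kerDegLE a (Φ.map (restrictLine (X : Fin 2 → MvPolynomial (Fin 2) K))) d ≠ ⊥) :
    ∃ p : ι → MvPolynomial (Fin 3) K,
      p ≠ 0 ∧ (∀ i, homog (p i) (d - a i)) ∧ Φ.mulVec p = 0 := by
  obtain ⟨w, hw, hw0, hderiv⟩ := exists_mem_kerDegLE_pencilDeriv_eq_zero hcard hΦ hs hd hker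
  choose p hp hpw using fun i => exists_homog_restrictLine_eq_of_pencilDeriv_eq_zero
    (mem_tupleDegLE.1 hw.1 i) (hderiv i)
  refine ⟨p, ?_, hp, funext fun j => ?_⟩
  · rintro rfl
    exact hw0 (funext fun i => by rw [← hpw i, Pi.zero_apply, map_zero, Pi.zero_apply])
  · refine eq_zero_of_restrictLine_X_eq_zero (d := d - b j)
      (IsWeightedHomogeneous.sum _ _ _ fun i _ => ?_) ?_
    · simpa only [sub_add_sub_cancel'] using (hΦ j i).mul (hp i)
    · have h := RingHom.map_mulVec
        (restrictLine (X : Fin 2 → MvPolynomial (Fin 2) K)).toRingHom Φ p j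
      refine h.trans (Eq.trans ?_ (congrFun (mem_kerDegLE.1 hw).2 j))
      exact congrFun (congrArg _ (funext hpw)) j

end GrauertMulich

section Cokernel

variable {K : Type*} [Field K] {n : ℕ} {a : Fin (n + 2) → ℤ} {b : Fin n → ℤ}
  {Φ : Matrix (Fin n) (Fin (n + 2)) (MvPolynomial (Fin 3) K)} {c : Fin 3 → K} {d m : ℤ}

lemma eventually_surjInDegree_restrictLine (hfin : FiniteColength n a b Φ) (u : Fin 2 → K) :
    ∀ᶠ d in Filter.atTop, SurjInDegree a b (Φ.map (restrictLine u)) d := by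
  obtain ⟨D, hD⟩ := hfin
  filter_upwards [Filter.eventually_ge_atTop D] with d hd
  rw [surjInDegree_iff]
  intro g hg
  choose p hp hpg using fun j => exists_homog_restrictLine_eq u (mem_tupleDegLE.1 hg j)
  obtain ⟨q, hq, hqp⟩ := hD d hd (mem_degPiece.2 hp)
  refine ⟨restrictLine u ∘ q,
    mem_tupleDegLE.2 fun i => restrictLine_mem_degLE u (mem_degPiece.1 hq i), funext fun j => ?_⟩
  exact (RingHom.map_mulVec (restrictLine u).toRingHom Φ q j).symm.trans
    ((congrArg (restrictLine u) (congrFun hqp j)).trans (hpg j))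

lemma Nd_pred_eq_bot (h : Nd n a Φ d = ⊥) : Nd n a Φ (d - 1) = ⊥ := by
  refine (Submodule.eq_bot_iff _).2 fun v hv => ?_
  have hmem : (X 0 : MvPolynomial (Fin 3) K) • v ∈ Nd n a Φ d := by
    refine ⟨mulL_mem (isWeightedHomogeneous_X K _ 0) hv.1, ?_⟩
    exact (Matrix.mulVec_smul Φ _ v).trans ((congrArg _ hv.2).trans (smul_zero _))
  rw [h, Submodule.mem_bot] at hmem
  exact (smul_eq_zero.1 hmem).resolve_left (X_ne_zero 0)

lemma kerDegLE_restrictLine_X_eq_bot [CharZero K] (hΦ : ∀ j i, homog (Φ j i) (a i - b j))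
    (hfin : FiniteColength n a b Φ) (hd : 2 * d + 1 < ∑ i, a i - ∑ j, b j)
    (hbot : Nd n a Φ d = ⊥) :
    kerDegLE a (Φ.map (restrictLine (X : Fin 2 → MvPolynomial (Fin 2) K))) d = ⊥ := by
  by_contra hker
  obtain ⟨p, hp0, hp, hΦp⟩ := exists_mulVec_eq_zero_of_kerDegLE_ne_bot (by simp) hΦ
    (eventually_surjInDegree_restrictLine hfin) hd hker
  exact hp0 ((Submodule.eq_bot_iff _).1 hbot p ⟨mem_degPiece.2 hp, hΦp⟩)

lemma mulLmap_injective_of_kerDegLE_eq_bot [Infinite K] (hc : c 2 ≠ 0)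
    (hbot : kerDegLE a (Φ.map (restrictLine (slopes c))) d = ⊥) :
    Function.Injective (mulLmap n a b Φ (linform c) (homog_linform c) d) := by
  refine (injective_iff_map_eq_zero _).2 fun x hx => ?_
  obtain ⟨⟨w, hw⟩, rfl⟩ := Submodule.Quotient.mk_surjective _ x
  rw [mulLmap, Submodule.mapQ_apply, Submodule.Quotient.mk_eq_zero] at hx
  obtain ⟨f, hf, hfw⟩ := hx
  replace hfw : Φ.mulVec f = linform c • w := hfw
  rw [SetLike.mem_coe, mem_degPiece] at hf
  have hker : restrictLine (slopes c) ∘ f ∈ kerDegLE a (Φ.map (restrictLine (slopes c))) d := by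
    refine mem_kerDegLE.2 ⟨mem_tupleDegLE.2 fun i => restrictLine_mem_degLE _ (hf i),
      funext fun j => (RingHom.map_mulVec (restrictLine (slopes c)).toRingHom Φ f j).symm.trans ?_⟩
    rw [hfw, Pi.smul_apply, smul_eq_mul, map_mul]
    exact mul_eq_zero_of_left (restrictLine_slopes_linform hc) _
  rw [hbot, Submodule.mem_bot] at hker
  choose g hg hfg using fun i => exists_isWeightedHomogeneous_eq_mul_of_dvd (hf i)
    (homog_linform c) (linform_dvd_of_restrictLine_eq_zero hc (hf i) (congrFun hker i))
  rw [Submodule.Quotient.mk_eq_zero]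
  refine ⟨g, mem_degPiece.2 fun i => sub_right_comm d (a i) 1 ▸ hg i, ?_⟩
  refine smul_right_injective _ (linform_ne_zero hc) ?_
  exact (Matrix.mulVec_smul Φ _ g).symm.trans ((congrArg Φ.mulVec (funext hfg)).symm.trans hfw)

lemma mulLmap_surjective_of_surjInDegree [Infinite K] (hΦ : ∀ j i, homog (Φ j i) (a i - b j))
    (hc : c 2 ≠ 0) (hs : SurjInDegree a b (Φ.map (restrictLine (slopes c))) d) :
    Function.Surjective (mulLmap n a b Φ (linform c) (homog_linform c) d) := by
  intro y
  obtain ⟨⟨g, hg⟩, rfl⟩ := Submodule.Quotient.mk_surjective _ y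
  have hg' := mem_degPiece.1 hg
  obtain ⟨v, hv, hvg⟩ := surjInDegree_iff.1 hs (restrictLine (slopes c) ∘ g)
    (mem_tupleDegLE.2 fun j => restrictLine_mem_degLE _ (hg' j))
  choose f hf hfv using fun i => exists_homog_restrictLine_eq _ (mem_tupleDegLE.1 hv i)
  have hhomog (j : Fin n) : homog (g j - Φ.mulVec f j) (d - b j) :=
    (hg' j).sub <| IsWeightedHomogeneous.sum _ _ _ fun i _ => by
      simpa only [sub_add_sub_cancel'] using (hΦ j i).mul (hf i)
  have hzero (j : Fin n) : restrictLine (slopes c) (g j - Φ.mulVec f j) = 0 := by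
    have h := RingHom.map_mulVec (restrictLine (slopes c)).toRingHom Φ f j
    rw [map_sub, sub_eq_zero, ← Function.comp_apply (f := restrictLine (slopes c)), ← hvg,
      ← funext hfv]
    exact h.symm
  choose w hw hgw using fun j => exists_isWeightedHomogeneous_eq_mul_of_dvd (hhomog j)
    (homog_linform c) (linform_dvd_of_restrictLine_eq_zero hc (hhomog j) (hzero j))
  refine ⟨Submodule.Quotient.mk ⟨w, mem_degPiece.2 fun j => sub_right_comm d (b j) 1 ▸ hw j⟩, ?_⟩
  rw [mulLmap, Submodule.mapQ_apply, Submodule.Quotient.eq]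
  refine ⟨-f, mem_degPiece.2 fun i => (hf i).neg, ?_⟩
  have hw : linform c • w = g - Φ.mulVec f := funext fun j => (hgw j).symm
  change Φ.mulVec (-f) = linform c • w - g
  rw [Matrix.mulVec_neg, hw, sub_sub_cancel_left]

end Cokernel

section GeneralLine

variable {K : Type*} [Field K]

lemma exists_eval_eq_pow_mul_eval_slopes (Q : MvPolynomial (Fin 2) K) :
    ∃ (P : MvPolynomial (Fin 3) K) (N : ℕ), ∀ c : Fin 3 → K, c 2 ≠ 0 →
      eval c P = c 2 ^ N * eval (slopes c) Q := by
  induction Q using MvPolynomial.induction_on with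
  | C r => exact ⟨C r, 0, fun c _ => by simp⟩
  | add p q hp hq =>
    obtain ⟨P, M, hP⟩ := hp
    obtain ⟨Q, N, hQ⟩ := hq
    refine ⟨X 2 ^ N * P + X 2 ^ M * Q, M + N, fun c hc => ?_⟩
    simp only [map_add, map_mul, map_pow, eval_X, hP c hc, hQ c hc]
    ring
  | mul_X p i hp =>
    obtain ⟨P, N, hP⟩ := hp
    refine ⟨P * -X i.castSucc, N + 1, fun c hc => ?_⟩
    simp only [map_mul, map_neg, eval_X, hP c hc, slopes]
    field_simp
    ring

lemma exists_ne_zero_forall_eval_slopes_ne_zero [Infinite K] {Q : MvPolynomial (Fin 2) K}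
    (hQ : Q ≠ 0) :
    ∃ P : MvPolynomial (Fin 3) K, P ≠ 0 ∧
      ∀ c, eval c P ≠ 0 → c 2 ≠ 0 ∧ eval (slopes c) Q ≠ 0 := by
  obtain ⟨P, N, hP⟩ := exists_eval_eq_pow_mul_eval_slopes Q
  refine ⟨P * X 2, mul_ne_zero ?_ (X_ne_zero 2), fun c hc => ?_⟩
  · rintro rfl
    refine hQ (MvPolynomial.funext fun u => ?_)
    have hu : slopes ![-u 0, -u 1, 1] = u := by
      ext i
      fin_cases i <;> simp [slopes]
    simpa [hu] using (hP ![-u 0, -u 1, 1] (by simp)).symm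
  · rw [map_mul, eval_X] at hc
    have hc2 := right_ne_zero_of_mul hc
    have hcP := left_ne_zero_of_mul hc
    rw [hP c hc2] at hcP
    exact ⟨hc2, right_ne_zero_of_mul hcP⟩

end GeneralLine

end

theorem statement2_general {K : Type*} [Field K] [CharZero K]
    (n : ℕ) (a : Fin (n + 2) → ℤ) (b : Fin n → ℤ)
    (Φ : Matrix (Fin n) (Fin (n + 2)) (MvPolynomial (Fin 3) K))
    (hΦ : ∀ j i, homog (Φ j i) (a i - b j))
    (hfin : FiniteColength n a b Φ)
    (m : ℤ) (hm : ((∑ i, a i) - (∑ j, b j)) / 2 = m)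
    (hstable : Nd n a Φ (m - 1) = ⊥) :
    ∃ P : MvPolynomial (Fin 3) K, P ≠ 0 ∧ ∀ c : Fin 3 → K, eval c P ≠ 0 →
      (∀ d : ℤ, d ≤ m - 1 →
        Function.Injective (mulLmap n a b Φ (linform c) (homog_linform c) d)) ∧
      (∀ d : ℤ, m ≤ d →
        Function.Surjective (mulLmap n a b Φ (linform c) (homog_linform c) d)) := by
  obtain ⟨Q, hQ, hgeneral⟩ := exists_ne_zero_forall_kerDegLE_map_eq_bot
    (fun j i => restrictLine_mem_degLE X (hΦ j i))
    (kerDegLE_restrictLine_X_eq_bot hΦ hfin (by omega) hstable) K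
  obtain ⟨P, hP, hslopes⟩ := exists_ne_zero_forall_eval_slopes_ne_zero hQ
  refine ⟨P, hP, fun c hc => ?_⟩
  obtain ⟨hc2, hcQ⟩ := hslopes c hc
  have hbot : kerDegLE a (Φ.map (restrictLine (slopes c))) (m - 1) = ⊥ :=
    map_restrictLine_X_map_eval Φ (slopes c) ▸ hgeneral _ hcQ
  refine ⟨fun d hd => mulLmap_injective_of_kerDegLE_eq_bot hc2 ?_,
    fun d hd => mulLmap_surjective_of_surjInDegree hΦ hc2 ?_⟩
  · exact eq_bot_mono (kerDegLE_mono hd) hbot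
  · refine surjInDegree_of_kerDegLE_eq_bot (fun j i => restrictLine_mem_degLE _ (hΦ j i))
      (eventually_surjInDegree_restrictLine hfin _) hbot ?_ (by omega)
    rw [eulerChar_eq, Fintype.card_fin, Fintype.card_fin]
    push_cast
    ring_nf
    omega

/-- If `a - b` is odd (`a - b = 2m + 1`) and `N_m = 0` (the associated
normalized rank-2 bundle is stable with `c₁ = -1`), then for a general linear form `L` the
multiplication map `×L : M_{d-1} → M_d` is injective for all `d ≤ m - 1` and surjective for
all `d ≥ m`. -/
theorem statement2 {K : Type*} [Field K] [IsAlgClosed K] [CharZero K]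
    (n : ℕ) (a : Fin (n + 2) → ℤ) (b : Fin n → ℤ)
    (Φ : Matrix (Fin n) (Fin (n + 2)) (MvPolynomial (Fin 3) K))
    (hΦ : ∀ j i, homog (Φ j i) (a i - b j))
    (hfin : FiniteColength n a b Φ)
    (m : ℤ) (hm : (∑ i, a i) - (∑ j, b j) = 2 * m + 1)
    (hstable : Nd n a Φ m = ⊥) :
    ∃ P : MvPolynomial (Fin 3) K, P ≠ 0 ∧ ∀ c : Fin 3 → K, eval c P ≠ 0 →
      (∀ d : ℤ, d ≤ m - 1 →
        Function.Injective (mulLmap n a b Φ (linform c) (homog_linform c) d)) ∧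
      (∀ d : ℤ, m ≤ d →
        Function.Surjective (mulLmap n a b Φ (linform c) (homog_linform c) d)) :=
  statement2_general n a b Φ hΦ hfin m (by omega) (Nd_pred_eq_bot hstable)
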